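/- Let μ, ν be finite Borel measures on ℝ with finite first moments such that μ(ℝ) = ν(ℝ) and bary(μ) ≥ bary(ν) (with bary(0) := 0). Suppose there exists an open interval I = (a,b) (with a,b ∈ [−∞,∞], a ≤ b) such that μ is concentrated on [a,b] ∩ ℝ and ν is concentrated on ℝ ∖ (a,b). Then μ ≤_cd ν. -/

import Mathlib

/-!
The integrals of a convex nonincreasing `φ` against `μ` and `ν` are compared through an affine
function `L x = c + s * x` with slope `s ≤ 0` such that `φ ≤ L` holds `μ`-a.e. and `L ≤ φ` holds
`ν`-a.e. Since the masses agree and the mean of `ν` is at most that of `μ`,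
`∫ φ dμ ≤ ∫ L dμ ≤ ∫ L dν ≤ ∫ φ dν` (`integral_le_of_affine_between`).

The choice of `L` depends on the interval. For real `a < b` it is the chord of `φ` over `[a, b]`
(`exists_chord`). For real `a` and `b = ∞` it is the constant `φ a`. For real `a = b` it is a
supporting line of `φ` at `a` (`exists_supporting_line`). For `a = -∞` and `b` real, the barycenter
condition forces `μ` to be concentrated at `b`, and a supporting line at `b` works. In the
remaining cases one of the two measures vanishes, hence so does the other.
-/

open MeasureTheory Set
open scoped ENNReal

noncomputable section

/-- A finite Borel measure on ℝ with finite first moment. -/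
def FiniteFirstMoment (μ : Measure ℝ) : Prop :=
  IsFiniteMeasure μ ∧ Integrable (fun x : ℝ => x) μ

/-- Linear growth of a real function. -/
def LinearGrowth (φ : ℝ → ℝ) : Prop :=
  ∃ C : ℝ, ∀ x : ℝ, |φ x| ≤ C * (1 + |x|)

/-- Convex-decreasing (second stochastic) order `μ ≤_cd ν`. -/
def CDOrder (μ ν : Measure ℝ) : Prop :=
  ∀ φ : ℝ → ℝ, ConvexOn ℝ Set.univ φ → Antitone φ → LinearGrowth φ →
    ∫ x, φ x ∂μ ≤ ∫ x, φ x ∂ν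

/-- Positive-convex-decreasing order `μ ≤_pcd ν`. -/
def PCDOrder (μ ν : Measure ℝ) : Prop :=
  ∀ φ : ℝ → ℝ, ConvexOn ℝ Set.univ φ → Antitone φ → (∀ x : ℝ, 0 ≤ φ x) →
    LinearGrowth φ → ∫ x, φ x ∂μ ≤ ∫ x, φ x ∂ν

/-- Convex order `μ ≤_c ν`. -/
def COrder (μ ν : Measure ℝ) : Prop :=
  ∀ φ : ℝ → ℝ, ConvexOn ℝ Set.univ φ → LinearGrowth φ →
    ∫ x, φ x ∂μ ≤ ∫ x, φ x ∂ν

/-- `P` is a coupling of `μ` and `ν`. -/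
def IsCoupling (P : Measure (ℝ × ℝ)) (μ ν : Measure ℝ) : Prop :=
  P.map Prod.fst = μ ∧ P.map Prod.snd = ν

/-- The supermartingale property of a measure on `ℝ × ℝ`. -/
def SupermartingaleProperty (P : Measure (ℝ × ℝ)) : Prop :=
  ∀ A : Set ℝ, MeasurableSet A →
    ∫ p in A ×ˢ (Set.univ : Set ℝ), p.2 ∂P ≤ ∫ p in A ×ˢ (Set.univ : Set ℝ), p.1 ∂P

/-- `P ∈ S(μ,ν)`: supermartingale coupling. -/
def IsSupermartingaleCoupling (P : Measure (ℝ × ℝ)) (μ ν : Measure ℝ) : Prop :=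
  IsCoupling P μ ν ∧ SupermartingaleProperty P

/-- `P|_{M×ℝ}` is a martingale. -/
def MartingaleOn (P : Measure (ℝ × ℝ)) (M : Set ℝ) : Prop :=
  ∀ A : Set ℝ, MeasurableSet A → A ⊆ M →
    ∫ p in A ×ˢ (Set.univ : Set ℝ), p.2 ∂P = ∫ p in A ×ˢ (Set.univ : Set ℝ), p.1 ∂P

/-- `P ∈ M(μ,ν)`: martingale coupling. -/
def IsMartingaleCoupling (P : Measure (ℝ × ℝ)) (μ ν : Measure ℝ) : Prop :=
  IsCoupling P μ ν ∧ MartingaleOn P Set.univ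

/-- `θ` is the shadow `S^ν(μ)` of `μ` in `ν`. -/
def IsShadow (μ ν θ : Measure ℝ) : Prop :=
  FiniteFirstMoment θ ∧ CDOrder μ θ ∧ θ ≤ ν ∧
  ∀ θ' : Measure ℝ, FiniteFirstMoment θ' → CDOrder μ θ' → θ' ≤ ν → CDOrder θ θ'

/-- `P` is the Increasing Supermartingale Transport from `μ` to `ν`. -/
def IsIncreasingSMT (μ ν : Measure ℝ) (P : Measure (ℝ × ℝ)) : Prop :=
  IsSupermartingaleCoupling P μ ν ∧
  ∀ x : ℝ, ∃ θ : Measure ℝ, IsShadow (μ.restrict (Set.Iic x)) ν θ ∧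
    ∀ A : Set ℝ, MeasurableSet A → P (Set.Iic x ×ˢ A) = θ A

/-- `P` is the Decreasing Supermartingale Transport from `μ` to `ν`. -/
def IsDecreasingSMT (μ ν : Measure ℝ) (P : Measure (ℝ × ℝ)) : Prop :=
  IsSupermartingaleCoupling P μ ν ∧
  ∀ x : ℝ, ∃ θ : Measure ℝ, IsShadow (μ.restrict (Set.Ici x)) ν θ ∧
    ∀ A : Set ℝ, MeasurableSet A → P (Set.Ici x ×ˢ A) = θ A

/-- Relaxed supermartingale Spence–Mirrlees property. -/
def RelaxedSupermartingaleSM (f : ℝ × ℝ → ℝ) : Prop :=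
  ∀ x₁ x₂ : ℝ, x₁ < x₂ →
    Antitone (fun y : ℝ => f (x₂, y) - f (x₁, y)) ∧
    ConvexOn ℝ Set.univ (fun y : ℝ => f (x₂, y) - f (x₁, y))

/-- (Strict) supermartingale Spence–Mirrlees property. -/
def SupermartingaleSM (f : ℝ × ℝ → ℝ) : Prop :=
  ∀ x₁ x₂ : ℝ, x₁ < x₂ →
    StrictAnti (fun y : ℝ => f (x₂, y) - f (x₁, y)) ∧
    StrictConvexOn ℝ Set.univ (fun y : ℝ => f (x₂, y) - f (x₁, y))

/-- `f⁺` is `S(μ,ν)`-uniformly integrable. -/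
def PosPartUnifInt (μ ν : Measure ℝ) (f : ℝ × ℝ → ℝ) : Prop :=
  ∀ ε : ℝ, 0 < ε → ∃ N : ℝ, ∀ P : Measure (ℝ × ℝ),
    IsSupermartingaleCoupling P μ ν →
      ∫ p in {p : ℝ × ℝ | N < max (f p) 0}, max (f p) 0 ∂P ≤ ε

/-- First-order left monotonicity of `(Γ, M)`. -/
def FirstOrderLeftMonotone (Γ : Set (ℝ × ℝ)) (M : Set ℝ) : Prop :=
  ∀ x₁ y₁ x₂ y₂ : ℝ, (x₁, y₁) ∈ Γ → (x₂, y₂) ∈ Γ → x₁ < x₂ → x₂ ∉ M → y₁ ≤ y₂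

/-- First-order right monotonicity of `(Γ, M)`. -/
def FirstOrderRightMonotone (Γ : Set (ℝ × ℝ)) (M : Set ℝ) : Prop :=
  ∀ x₁ y₁ x₂ y₂ : ℝ, (x₁, y₁) ∈ Γ → (x₂, y₂) ∈ Γ → x₁ < x₂ → x₁ ∉ M → y₂ ≤ y₁

/-- Second-order left monotonicity of `Γ`. -/
def SecondOrderLeftMonotone (Γ : Set (ℝ × ℝ)) : Prop :=
  ∀ x y₁ y₂ x' y' : ℝ, (x, y₁) ∈ Γ → (x, y₂) ∈ Γ → (x', y') ∈ Γ →
    y₁ < y₂ → x < x' → y' ∉ Set.Ioo y₁ y₂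

/-- Second-order right monotonicity of `Γ`. -/
def SecondOrderRightMonotone (Γ : Set (ℝ × ℝ)) : Prop :=
  ∀ x y₁ y₂ x' y' : ℝ, (x, y₁) ∈ Γ → (x, y₂) ∈ Γ → (x', y') ∈ Γ →
    y₁ < y₂ → x' < x → y' ∉ Set.Ioo y₁ y₂

/-- Nondegeneracy of `(Γ, M)`. -/
def Nondegenerate (Γ : Set (ℝ × ℝ)) (M : Set ℝ) : Prop :=
  (∀ x y : ℝ, (x, y) ∈ Γ → x < y → ∃ y' : ℝ, y' < x ∧ (x, y') ∈ Γ) ∧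
  (∀ x y : ℝ, x ∈ M → (x, y) ∈ Γ → y < x → ∃ y' : ℝ, x < y' ∧ (x, y') ∈ Γ)

/-- The put function `p_μ`. -/
def put (μ : Measure ℝ) (t : ℝ) : ℝ := ∫ s, max (t - s) 0 ∂μ

/-- `x` is a barrier for the supermartingale transports from `μ` to `ν`. -/
def IsBarrier (μ ν : Measure ℝ) (x : ℝ) : Prop :=
  ∀ P : Measure (ℝ × ℝ), IsSupermartingaleCoupling P μ ν →
    P {p : ℝ × ℝ | p.1 ≤ x ∧ x < p.2} = 0 ∧ P {p : ℝ × ℝ | x ≤ p.1 ∧ p.2 < x} = 0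

/-- Barycenter of a finite measure (with `bary 0 = 0`). -/
def bary (θ : Measure ℝ) : ℝ := (∫ t, t ∂θ) / (θ Set.univ).toReal

/-- A nonincreasing convex function has at every point a supporting line of nonpositive slope. -/
lemma exists_supporting_line {φ : ℝ → ℝ} (hc : ConvexOn ℝ Set.univ φ) (ha : Antitone φ) (b : ℝ) :
    ∃ s ≤ 0, ∀ x, φ b + s * (x - b) ≤ φ x := by
  -- The slope is the left derivative of `φ` at `b`, written as a supremum of secant slopes.
  let S : Set ℝ := (fun x => (φ x - φ b) / (x - b)) '' Set.Iio b
  have hne : S.Nonempty := ⟨_, b - 1, by simp, rfl⟩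
  have hup : ∀ y, b < y → ∀ z ∈ S, z ≤ (φ y - φ b) / (y - b) := by
    rintro y hy _ ⟨x, hx, rfl⟩
    have hx' : x < b := hx
    exact hc.secant_mono (mem_univ _) (mem_univ _) (mem_univ _) hx'.ne hy.ne' (hx'.trans hy).le
  have hbdd : BddAbove S := ⟨_, hup (b + 1) (by linarith)⟩
  refine ⟨sSup S, csSup_le hne ?_, fun x => ?_⟩
  · rintro _ ⟨x, hx, rfl⟩
    have hx' : x < b := hx
    exact div_nonpos_of_nonneg_of_nonpos (sub_nonneg.2 (ha hx'.le)) (by linarith)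
  · rcases lt_trichotomy x b with h | h | h
    · have h1 : (φ x - φ b) / (x - b) ≤ sSup S := le_csSup hbdd ⟨x, h, rfl⟩
      rw [div_le_iff_of_neg (by linarith)] at h1
      linarith
    · simp [h]
    · have h1 : sSup S ≤ (φ x - φ b) / (x - b) := csSup_le hne (hup x h)
      rw [le_div_iff₀ (by linarith)] at h1
      linarith

/-- The chord of a nonincreasing convex function over `[a, b]` has nonpositive slope, lies above
the function on `[a, b]` and below it off `(a, b)`. -/
lemma exists_chord {φ : ℝ → ℝ} (hc : ConvexOn ℝ Set.univ φ) (ha : Antitone φ) {a b : ℝ}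
    (hab : a < b) :
    ∃ s ≤ 0, (∀ x, a ≤ x → x ≤ b → φ x ≤ φ a + s * (x - a)) ∧
      ∀ x, (a < x → b ≤ x) → φ a + s * (x - a) ≤ φ x := by
  have hsec : ∀ x y, x ≠ a → y ≠ a → x ≤ y → (φ x - φ a) / (x - a) ≤ (φ y - φ a) / (y - a) :=
    fun x y => hc.secant_mono (mem_univ _) (mem_univ _) (mem_univ _)
  refine ⟨(φ b - φ a) / (b - a), div_nonpos_of_nonpos_of_nonneg (sub_nonpos.2 (ha hab.le))
    (by linarith), fun x h1 h2 => ?_, fun x h => ?_⟩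
  · rcases h1.eq_or_lt with rfl | h1
    · simp
    · have := hsec x b h1.ne' hab.ne' h2
      rw [div_le_iff₀ (by linarith)] at this
      linarith
  · rcases lt_trichotomy x a with h1 | rfl | h1
    · have := hsec x b h1.ne hab.ne' (h1.trans hab).le
      rw [div_le_iff_of_neg (by linarith)] at this
      linarith
    · simp
    · have := hsec b x hab.ne' h1.ne' (h h1)
      rw [le_div_iff₀ (by linarith)] at this
      linarith

lemma integrable_of_linearGrowth {φ : ℝ → ℝ} (ha : Antitone φ) (hg : LinearGrowth φ)
    {μ : Measure ℝ} (hμ : FiniteFirstMoment μ) : Integrable φ μ := by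
  obtain ⟨hfin, hint⟩ := hμ
  obtain ⟨C, hC⟩ := hg
  have h1 : Integrable (fun x : ℝ => C * (1 + |x|)) μ :=
    ((integrable_const 1).add hint.abs).const_mul C
  exact h1.mono' ha.measurable.aestronglyMeasurable (.of_forall hC)

lemma integral_affine {μ : Measure ℝ} (hμ : FiniteFirstMoment μ) (c s d : ℝ) :
    Integrable (fun x => c + s * (x - d)) μ ∧
      ∫ x, (c + s * (x - d)) ∂μ
        = (c - s * d) * (μ Set.univ).toReal + s * ∫ x, x ∂μ := by
  obtain ⟨hfin, hint⟩ := hμ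
  have he : (fun x => c + s * (x - d)) = fun x => (c - s * d) + s * x := by
    ext x; ring
  rw [he]
  refine ⟨(integrable_const _).add (hint.const_mul s), ?_⟩
  rw [integral_add (integrable_const _) (hint.const_mul s), integral_const, integral_const_mul]
  simp [Measure.real, mul_comm]

/-- An affine function of nonpositive slope that separates `φ` in the a.e. sense yields the
comparison of the integrals of `φ`. -/
lemma integral_le_of_affine_between {φ : ℝ → ℝ} (ha : Antitone φ) (hg : LinearGrowth φ)
    {μ ν : Measure ℝ} (hμ : FiniteFirstMoment μ) (hν : FiniteFirstMoment ν)
    (hmass : μ Set.univ = ν Set.univ) (hmean : ∫ x, x ∂ν ≤ ∫ x, x ∂μ) (c s d : ℝ) (hs : s ≤ 0)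
    (h1 : ∀ᵐ x ∂μ, φ x ≤ c + s * (x - d)) (h2 : ∀ᵐ x ∂ν, c + s * (x - d) ≤ φ x) :
    ∫ x, φ x ∂μ ≤ ∫ x, φ x ∂ν := by
  obtain ⟨i1, e1⟩ := integral_affine hμ c s d
  obtain ⟨i2, e2⟩ := integral_affine hν c s d
  calc ∫ x, φ x ∂μ ≤ ∫ x, (c + s * (x - d)) ∂μ :=
        integral_mono_ae (integrable_of_linearGrowth ha hg hμ) i1 h1
    _ ≤ ∫ x, (c + s * (x - d)) ∂ν := by
        rw [e1, e2, hmass]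
        have := mul_le_mul_of_nonpos_left hmean hs
        linarith
    _ ≤ ∫ x, φ x ∂ν := integral_mono_ae i2 (integrable_of_linearGrowth ha hg hν) h2

/-- If `μ` lives on `(-∞, b]`, `ν` on `[b, ∞)`, and the mean of `ν` is at most that of `μ`, then
`μ` is concentrated at `b`. -/
lemma ae_eq_of_mean_le {μ ν : Measure ℝ} (hμ : FiniteFirstMoment μ) (hν : FiniteFirstMoment ν)
    (hmass : μ Set.univ = ν Set.univ) (hmean : ∫ x, x ∂ν ≤ ∫ x, x ∂μ) (b : ℝ)
    (h1 : ∀ᵐ x ∂μ, x ≤ b) (h2 : ∀ᵐ x ∂ν, b ≤ x) : ∀ᵐ x ∂μ, x = b := by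
  obtain ⟨i1, e1⟩ := integral_affine hμ 0 (-1) b
  obtain ⟨i2, e2⟩ := integral_affine hν 0 (-1) b
  have hn1 : 0 ≤ᵐ[μ] fun x => 0 + -1 * (x - b) := by
    filter_upwards [h1] with x hx
    simp only [Pi.zero_apply]
    linarith
  have hn2 : ∫ x, (0 + -1 * (x - b)) ∂ν ≤ 0 := by
    refine integral_nonpos_of_ae ?_
    filter_upwards [h2] with x hx
    simp only [Pi.zero_apply]
    linarith
  have hz : ∫ x, (0 + -1 * (x - b)) ∂μ = 0 := by
    refine le_antisymm ?_ (integral_nonneg_of_ae hn1)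
    rw [e1, hmass]
    rw [e2] at hn2
    linarith
  filter_upwards [(integral_eq_zero_iff_of_nonneg_ae hn1 i1).1 hz] with x hx
  simp only [Pi.zero_apply] at hx
  linarith

lemma mean_le_of_bary_le {μ ν : Measure ℝ} (hμ : FiniteFirstMoment μ)
    (hmass : μ Set.univ = ν Set.univ) (hbary : bary ν ≤ bary μ) (hne : μ ≠ 0) :
    ∫ x, x ∂ν ≤ ∫ x, x ∂μ := by
  have := hμ.1
  have hpos : 0 < (μ Set.univ).toReal :=
    ENNReal.toReal_pos (by simpa using hne) (measure_ne_top _ _)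
  unfold bary at hbary
  rwa [← hmass, div_le_div_iff_of_pos_right hpos] at hbary


/-- Lemma 5.4, first part. If `μ(ℝ) = ν(ℝ)`, `bary(μ) ≥ bary(ν)`,
`μ` is concentrated on `[a,b] ∩ ℝ` and `ν` is concentrated on `ℝ ∖ (a,b)` for extended
reals `a ≤ b`, then `μ ≤_cd ν`. -/
theorem order_when_out_of_interval
    (μ ν : Measure ℝ) (hμ : FiniteFirstMoment μ) (hν : FiniteFirstMoment ν)
    (hmass : μ Set.univ = ν Set.univ) (hbary : bary ν ≤ bary μ)
    (a b : EReal) (hab : a ≤ b)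
    (hμI : μ {t : ℝ | ¬(a ≤ (t : EReal) ∧ (t : EReal) ≤ b)} = 0)
    (hνI : ν {t : ℝ | a < (t : EReal) ∧ (t : EReal) < b} = 0) :
    CDOrder μ ν := by
  intro φ hc ha hg
  by_cases hne : μ = 0
  · have hν0 : ν = 0 := by
      rw [← Measure.measure_univ_eq_zero, ← hmass, hne]; simp
    simp [hne, hν0]
  have hνne : ν ≠ 0 := by
    rintro rfl
    exact hne (Measure.measure_univ_eq_zero.1 (by rw [hmass]; simp))
  have hmean := mean_le_of_bary_le hμ hmass hbary hne
  have hμae : ∀ᵐ t : ℝ ∂μ, a ≤ (t : EReal) ∧ (t : EReal) ≤ b := hμI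
  have hνae : ∀ᵐ t : ℝ ∂ν, ¬(a < (t : EReal) ∧ (t : EReal) < b) := by
    rw [ae_iff]; simpa only [not_not] using hνI
  -- A nonzero measure has no a.e. false property, which excludes the degenerate intervals.
  have hμfalse : ¬ ∀ᵐ t : ℝ ∂μ, False := by simpa using hne
  have hνfalse : ¬ ∀ᵐ t : ℝ ∂ν, False := by simpa using hνne
  have hpoint : ∀ d : ℝ, (∀ᵐ t : ℝ ∂μ, t = d) → ∫ x, φ x ∂μ ≤ ∫ x, φ x ∂ν := by
    intro d hd
    obtain ⟨s, hs, hle⟩ := exists_supporting_line hc ha d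
    refine integral_le_of_affine_between ha hg hμ hν hmass hmean (φ d) s d hs ?_ (.of_forall hle)
    filter_upwards [hd] with t ht
    simp [ht]
  induction a using EReal.rec with
  | top => exact absurd (hμae.mono fun t ht => by simp at ht) hμfalse
  | bot =>
    induction b using EReal.rec with
    | bot => exact absurd (hμae.mono fun t ht => by simp at ht) hμfalse
    | top => exact absurd (hνae.mono fun t ht => by simp at ht) hνfalse
    | coe b =>
      exact hpoint b (ae_eq_of_mean_le hμ hν hmass hmean b
        (hμae.mono fun t ht => by simpa using ht) (hνae.mono fun t ht => by simpa using ht))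
  | coe a =>
    induction b using EReal.rec with
    | bot => exact absurd (hμae.mono fun t ht => by simp at ht) hμfalse
    | top =>
      refine integral_le_of_affine_between ha hg hμ hν hmass hmean (φ a) 0 0 le_rfl ?_ ?_
      · filter_upwards [hμae] with t ht
        have ht' : a ≤ t := by simpa using ht
        simpa using ha ht'
      · filter_upwards [hνae] with t ht
        have ht' : t ≤ a := by simpa using ht
        simpa using ha ht'
    | coe b =>
      simp only [EReal.coe_le_coe_iff, EReal.coe_lt_coe_iff] at hab hμae hνae
      rcases hab.eq_or_lt with rfl | hlt
      · exact hpoint a (hμae.mono fun t ht => le_antisymm ht.2 ht.1)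
      · obtain ⟨s, hs, h1, h2⟩ := exists_chord hc ha hlt
        refine integral_le_of_affine_between ha hg hμ hν hmass hmean (φ a) s a hs ?_ ?_
        · filter_upwards [hμae] with t ht
          exact h1 t ht.1 ht.2
        · filter_upwards [hνae] with t ht
          exact h2 t fun h => not_lt.1 fun h' => ht ⟨h, h'⟩
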